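/- arXiv:1910.13935 — 2 statements merged into one kernel-verified Lean document; each statement's English description precedes it below -/
import Mathlib

section
/- For every real number p with 2 < p < ∞, the Banach space ℓ^p of p-summable real sequences (with metric induced by the ℓ^p norm) does not admit a coarse embedding into the Hilbert space ℓ². That is, there do not exist a map f : ℓ^p → ℓ² and non-decreasing functions ρ₋, ρ₊ : [0,∞) → [0,∞) with ρ₋(t) → ∞ as t → ∞ such that ρ₋(‖x − y‖_p) ≤ ‖f(x) − f(y)‖₂ ≤ ρ₊(‖x − y‖_p) for all x, y ∈ ℓ^p. -/
open Filter
open scoped NNReal ENNReal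

/-- `f : X → Y` is a coarse embedding if there are non-decreasing functions
`ρ₋, ρ₊ : [0,∞) → [0,∞)` with `ρ₋(t) → ∞` as `t → ∞` such that
`ρ₋(d(x,y)) ≤ d'(f x, f y) ≤ ρ₊(d(x,y))` for all `x, y`. -/
def CoarseEmbedding {X Y : Type*} [MetricSpace X] [MetricSpace Y] (f : X → Y) : Prop :=
  ∃ ρminus ρplus : ℝ≥0 → ℝ≥0,
    Monotone ρminus ∧ Monotone ρplus ∧
    Tendsto ρminus atTop atTop ∧
    ∀ x y : X,
      ρminus (nndist x y) ≤ nndist (f x) (f y) ∧ nndist (f x) (f y) ≤ ρplus (nndist x y)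

/-- Parseval identity on a finite abelian group. -/
lemma parseval_aux {G : Type*} [AddCommGroup G] [Fintype G] (g : G → ℂ) :
    ∑ ψ : AddChar G ℂ, ‖∑ x, ψ (-x) * g x‖ ^ 2 = Fintype.card G * ∑ x, ‖g x‖ ^ 2 := by
  classical
  have key : ∀ ψ : AddChar G ℂ, ((‖∑ x, ψ (-x) * g x‖ ^ 2 : ℝ) : ℂ)
      = ∑ x, ∑ y, ψ (y - x) * (g x * (starRingEnd ℂ) (g y)) := by
    intro ψ
    push_cast
    rw [← Complex.mul_conj', map_sum, Finset.sum_mul_sum]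
    refine Finset.sum_congr rfl fun x _ => Finset.sum_congr rfl fun y _ => ?_
    rw [map_mul, ← AddChar.map_neg_eq_conj, neg_neg, sub_eq_add_neg, AddChar.map_add_eq_mul]
    ring
  have : ((∑ ψ : AddChar G ℂ, ‖∑ x, ψ (-x) * g x‖ ^ 2 : ℝ) : ℂ)
      = ((Fintype.card G * ∑ x, ‖g x‖ ^ 2 : ℝ) : ℂ) := by
    rw [Complex.ofReal_sum, Finset.sum_congr rfl fun ψ _ => key ψ, Finset.sum_comm]
    push_cast
    rw [Finset.mul_sum]
    refine Finset.sum_congr rfl fun x _ => ?_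
    rw [Finset.sum_comm]
    simp_rw [← Finset.sum_mul, AddChar.sum_apply_eq_ite, sub_eq_zero, ite_mul, zero_mul]
    rw [Finset.sum_ite_eq' Finset.univ x]
    simp [Complex.mul_conj']
  exact_mod_cast this

lemma parseval_diff {G : Type*} [AddCommGroup G] [Fintype G] (g : G → ℂ) (a : G) :
    Fintype.card G * ∑ x, ‖g (x + a) - g x‖ ^ 2
      = ∑ ψ : AddChar G ℂ, ‖ψ a - 1‖ ^ 2 * ‖∑ x, ψ (-x) * g x‖ ^ 2 := by
  rw [← parseval_aux (fun x => g (x + a) - g x)]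
  refine Finset.sum_congr rfl fun ψ _ => ?_
  rw [← mul_pow, ← norm_mul]
  congr 2
  have : ∑ x, ψ (-x) * g (x + a) = ψ a * ∑ x, ψ (-x) * g x := by
    rw [Finset.mul_sum, ← Equiv.sum_comp (Equiv.addRight a) (fun x => ψ a * (ψ (-x) * g x))]
    refine Finset.sum_congr rfl fun x _ => ?_
    simp only [Equiv.coe_addRight]
    rw [← mul_assoc, ← AddChar.map_add_eq_mul]
    congr 2
    abel
  simp only [mul_sub, Finset.sum_sub_distrib, this]
  ring

/-- random sign vectors -/
def sgnVec (n m : ℕ) (b : Fin n → Bool) : Fin n → ZMod m := fun j => if b j then 1 else -1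

lemma norm_sub_one_sq {w : ℂ} (hw : ‖w‖ = 1) : ‖w - 1‖ ^ 2 = 2 - 2 * w.re := by
  have h1 : w.re * w.re + w.im * w.im = 1 := by
    rw [← Complex.normSq_apply, Complex.normSq_eq_norm_sq, hw]; norm_num
  rw [← Complex.normSq_eq_norm_sq, Complex.normSq_apply]
  simp
  nlinarith

lemma re_sq_le {z : ℂ} (hz : ‖z‖ = 1) {l : ℕ} (hl : 0 < l) (h : z ^ (2 * l) = -1) :
    z.re ^ 2 ≤ 1 - 1 / (l : ℝ) ^ 2 := by
  have h1 : z.re * z.re + z.im * z.im = 1 := by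
    rw [← Complex.normSq_apply, Complex.normSq_eq_norm_sq, hz]; norm_num
  have hl' : (0 : ℝ) < l := by exact_mod_cast hl
  have h2 : (2 : ℝ) ≤ l * ‖z ^ 2 - 1‖ := by
    have e : (z ^ 2 - 1) * ∑ i ∈ Finset.range l, (z ^ 2) ^ i = -2 := by
      rw [mul_comm, geom_sum_mul, ← pow_mul, h]; norm_num
    have e2 : ‖∑ i ∈ Finset.range l, (z ^ 2) ^ i‖ ≤ l := by
      refine (norm_sum_le _ _).trans ?_
      simp [norm_pow, hz]
    have e3 := congrArg norm e
    rw [norm_mul] at e3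
    have : ‖(-2 : ℂ)‖ = 2 := by simp
    rw [this] at e3
    nlinarith [norm_nonneg (z ^ 2 - 1)]
  have h3 : ‖z ^ 2 - 1‖ ^ 2 = 4 * z.im ^ 2 := by
    rw [norm_sub_one_sq (by rw [norm_pow, hz]; norm_num)]
    simp [pow_two]
    nlinarith
  have h4 : (4 : ℝ) ≤ l ^ 2 * (4 * z.im ^ 2) := by
    rw [← h3]; nlinarith
  have h5 : 1 / (l : ℝ) ^ 2 ≤ z.im ^ 2 := by
    rw [div_le_iff₀ (by positivity)]; nlinarith
  nlinarith

lemma real_ineq {P t : ℝ} {N : ℕ} (ht0 : 0 ≤ t) (ht1 : t ≤ 1) (hN : N * t ≤ 1)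
    (hP : P ^ 2 ≤ (1 - t) ^ N) : N * t ≤ 4 * (1 - P) := by
  have hb : 1 + N * t ≤ (1 + t) ^ N := one_add_mul_le_pow (by linarith) N
  have hc : (1 - t) ^ N * (1 + t) ^ N ≤ 1 := by
    rw [← mul_pow]
    exact pow_le_one₀ (by nlinarith) (by nlinarith)
  have h0 : 0 ≤ (1 - t) ^ N := pow_nonneg (by linarith) _
  have hd : (1 - t) ^ N * (1 + N * t) ≤ 1 := (mul_le_mul_of_nonneg_left hb h0).trans hc
  have hnt : 0 ≤ N * t := by positivity
  have he : (1 - t) ^ N ≤ 1 - N * t / 2 := by nlinarith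
  nlinarith [sq_nonneg (1 - P)]

lemma mode_ineq {n l : ℕ} (hl : 0 < l) (hn : n ≤ l ^ 2) [NeZero (4 * l)]
    (ψ : AddChar (Fin n → ZMod (4 * l)) ℂ) :
    2 ^ n * ∑ j, ‖ψ (Pi.single j ((2 * l : ℕ) : ZMod (4 * l))) - 1‖ ^ 2
      ≤ 8 * (l : ℝ) ^ 2 * ∑ b, ‖ψ (sgnVec n (4 * l) b) - 1‖ ^ 2 := by
  classical
  have hl' : (0 : ℝ) < l := by exact_mod_cast hl
  set z : Fin n → ℂ := fun j => ψ (Pi.single j 1) with hzdef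
  have hz : ∀ j, ‖z j‖ = 1 := fun j => AddChar.norm_apply ψ _
  have hpow : ∀ j (k : ℕ), ψ (Pi.single j (k : ZMod (4 * l))) = z j ^ k := by
    intro j k
    rw [hzdef]
    simp only
    rw [← AddChar.map_nsmul_eq_pow]
    congr 1
    rw [← Pi.single_smul]
    simp
  have hsum : ∑ b, ψ (sgnVec n (4 * l) b) = ((2 ^ n * ∏ j, (z j).re : ℝ) : ℂ) := by
    have h1 : ∀ b, ψ (sgnVec n (4 * l) b)
        = ∏ j, (if b j then z j else (starRingEnd ℂ) (z j)) := by
      intro b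
      have : sgnVec n (4 * l) b = ∑ j, Pi.single j (sgnVec n (4 * l) b j) :=
        (Finset.univ_sum_single _).symm
      rw [this]
      have hmap : ∀ (s : Finset (Fin n)) (v : Fin n → (Fin n → ZMod (4 * l))),
          ψ (∑ j ∈ s, v j) = ∏ j ∈ s, ψ (v j) := by
        intro s v
        induction s using Finset.induction_on with
        | empty => simp
        | insert a s ha ih => rw [Finset.sum_insert ha, Finset.prod_insert ha,
            AddChar.map_add_eq_mul, ih]
      rw [hmap]
      refine Finset.prod_congr rfl fun j _ => ?_
      unfold sgnVec
      split_ifs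
      · rfl
      · rw [Pi.single_neg, AddChar.map_neg_eq_conj]
    simp_rw [h1]
    have h2 := Finset.prod_univ_sum (fun _ : Fin n => (Finset.univ : Finset Bool))
      (fun j (c : Bool) => if c then z j else (starRingEnd ℂ) (z j))
    rw [Fintype.piFinset_univ] at h2
    rw [← h2]
    simp only [Fintype.sum_bool, if_true, Bool.false_eq_true, if_false, Complex.add_conj]
    push_cast
    rw [Finset.prod_mul_distrib]
    simp
  have hR : ∑ b, ‖ψ (sgnVec n (4 * l) b) - 1‖ ^ 2 = 2 ^ n * (2 * (1 - ∏ j, (z j).re)) := by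
    rw [Finset.sum_congr rfl fun b _ => norm_sub_one_sq (AddChar.norm_apply ψ _),
      Finset.sum_sub_distrib, ← Finset.mul_sum, ← Complex.re_sum, hsum, Complex.ofReal_re]
    simp
    ring
  set S : Finset (Fin n) := Finset.univ.filter fun j => z j ^ (2 * l) = -1 with hS
  have hL : ∑ j, ‖ψ (Pi.single j ((2 * l : ℕ) : ZMod (4 * l))) - 1‖ ^ 2 = 4 * (S.card : ℝ) := by
    have h1 : ∀ j, ‖ψ (Pi.single j ((2 * l : ℕ) : ZMod (4 * l))) - 1‖ ^ 2
        = if z j ^ (2 * l) = -1 then (4 : ℝ) else 0 := by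
      intro j
      rw [hpow]
      split_ifs with h
      · rw [h]; norm_num
      · have h4 : z j ^ (2 * l) * z j ^ (2 * l) = 1 := by
          rw [← pow_add, ← hpow j, show 2 * l + 2 * l = 4 * l by ring, ZMod.natCast_self,
            Pi.single_zero, AddChar.map_zero_eq_one]
        rcases mul_self_eq_one_iff.mp h4 with h5 | h5
        · rw [h5]; simp
        · exact absurd h5 h
    simp_rw [h1]
    rw [← Finset.sum_filter, Finset.sum_const]
    simp [hS, mul_comm]
  have hle : ∀ j, (z j).re ^ 2 ≤ if z j ^ (2 * l) = -1 then 1 - 1 / (l : ℝ) ^ 2 else 1 := by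
    intro j
    split_ifs with h
    · exact re_sq_le (hz j) hl h
    · have := Complex.abs_re_le_norm (z j)
      rw [hz j] at this
      rw [← sq_abs]
      exact pow_le_one₀ (abs_nonneg _) this
  have hP : (∏ j, (z j).re) ^ 2 ≤ (1 - 1 / (l : ℝ) ^ 2) ^ S.card := by
    rw [← Finset.prod_pow]
    refine (Finset.prod_le_prod (fun j _ => sq_nonneg _) fun j _ => hle j).trans ?_
    rw [← Finset.prod_filter, Finset.prod_const]
  have hcard : (S.card : ℝ) ≤ (l : ℝ) ^ 2 := by
    have : S.card ≤ n := by simpa using Finset.card_le_univ S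
    exact_mod_cast this.trans hn
  have h1l : (1 : ℝ) ≤ (l : ℝ) ^ 2 := by exact_mod_cast Nat.one_le_pow 2 l hl
  have hfin := real_ineq (P := ∏ j, (z j).re) (t := 1 / (l : ℝ) ^ 2) (N := S.card) (by positivity)
    (by rw [div_le_one (by positivity)]; exact h1l)
    (by rw [mul_one_div, div_le_one (by positivity)]; exact hcard) hP
  rw [mul_one_div, div_le_iff₀ (by positivity)] at hfin
  rw [hR, hL]
  have h2n : (0 : ℝ) < 2 ^ n := by positivity
  nlinarith [mul_le_mul_of_nonneg_left hfin h2n.le]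

lemma cotype_scalar {n l : ℕ} (hl : 0 < l) (hn : n ≤ l ^ 2) [NeZero (4 * l)]
    (g : (Fin n → ZMod (4 * l)) → ℂ) :
    2 ^ n * ∑ j, ∑ x, ‖g (x + Pi.single j ((2 * l : ℕ) : ZMod (4 * l))) - g x‖ ^ 2
      ≤ 8 * (l : ℝ) ^ 2 * ∑ b, ∑ x, ‖g (x + sgnVec n (4 * l) b) - g x‖ ^ 2 := by
  have hc : (0 : ℝ) < Fintype.card (Fin n → ZMod (4 * l)) := by exact_mod_cast Fintype.card_pos
  refine le_of_mul_le_mul_left ?_ hc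
  have e : ∀ {ι : Type} [Fintype ι] (A : ℝ) (v : ι → (Fin n → ZMod (4 * l))),
      (Fintype.card (Fin n → ZMod (4 * l)) : ℝ) * (A * ∑ j, ∑ x, ‖g (x + v j) - g x‖ ^ 2)
      = ∑ ψ : AddChar (Fin n → ZMod (4 * l)) ℂ,
          A * ∑ j, ‖ψ (v j) - 1‖ ^ 2 * ‖∑ x, ψ (-x) * g x‖ ^ 2 := by
    intro ι _ A v
    rw [mul_left_comm, Finset.mul_sum, Finset.sum_congr rfl fun j _ => parseval_diff g (v j),
      Finset.sum_comm, Finset.mul_sum]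
  rw [e, e]
  refine Finset.sum_le_sum fun ψ _ => ?_
  rw [← Finset.sum_mul, ← Finset.sum_mul, ← mul_assoc, ← mul_assoc]
  exact mul_le_mul_of_nonneg_right (mode_ineq hl hn ψ) (by positivity)

lemma cotype_l2 {n l : ℕ} (hl : 0 < l) (hn : n ≤ l ^ 2) [NeZero (4 * l)]
    (g : (Fin n → ZMod (4 * l)) → lp (fun _ : ℕ => ℝ) 2) :
    2 ^ n * ∑ j, ∑ x, ‖g (x + Pi.single j ((2 * l : ℕ) : ZMod (4 * l))) - g x‖ ^ 2
      ≤ 8 * (l : ℝ) ^ 2 * ∑ b, ∑ x, ‖g (x + sgnVec n (4 * l) b) - g x‖ ^ 2 := by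
  have hs : ∀ x y, HasSum (fun i : ℕ => ‖((g x i : ℝ) : ℂ) - ((g y i : ℝ) : ℂ)‖ ^ 2)
      (‖g x - g y‖ ^ 2) := by
    intro x y
    have := lp.hasSum_norm (p := 2) (by simp) (g x - g y)
    simp only [ENNReal.toReal_ofNat, Real.rpow_ofNat] at this
    convert this using 2 with i
    rw [← Complex.ofReal_sub, Complex.norm_real]
    rfl
  have h1 := (hasSum_sum fun j (_ : j ∈ Finset.univ) => hasSum_sum fun x (_ : x ∈ Finset.univ) =>
    hs (x + Pi.single j ((2 * l : ℕ) : ZMod (4 * l))) x).mul_left ((2 : ℝ) ^ n)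
  have h2 := (hasSum_sum fun b (_ : b ∈ Finset.univ) => hasSum_sum fun x (_ : x ∈ Finset.univ) =>
    hs (x + sgnVec n (4 * l) b) x).mul_left (8 * (l : ℝ) ^ 2)
  exact hasSum_le (fun i => cotype_scalar hl hn fun x => ((g x i : ℝ) : ℂ)) h1 h2

/-- coordinates of the embedding of the discrete torus into `ℓ^p` -/
noncomputable def torusCoord (n m : ℕ) [NeZero m] (s : ℝ) (x : Fin n → ZMod m) (i : ℕ) : ℝ :=
  if h : i < n then s * (ZMod.stdAddChar (x ⟨i, h⟩)).re
  else if h : i - n < n then s * (ZMod.stdAddChar (x ⟨i - n, h⟩)).im else 0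

lemma torusCoord_zero {n m : ℕ} [NeZero m] {s : ℝ} {x : Fin n → ZMod m} {i : ℕ}
    (hi : i ∉ Finset.range (2 * n)) : torusCoord n m s x i = 0 := by
  rw [Finset.mem_range] at hi
  unfold torusCoord
  rw [dif_neg (by omega), dif_neg (by omega)]

lemma torusCoord_diff {n m : ℕ} [NeZero m] {s δ : ℝ} (hs : 0 ≤ s) (hδ : 0 ≤ δ)
    {x y : Fin n → ZMod m}
    (h : ∀ j, ‖(ZMod.stdAddChar (x j) : ℂ) - ZMod.stdAddChar (y j)‖ ≤ δ) (i : ℕ) :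
    |torusCoord n m s x i - torusCoord n m s y i| ≤ s * δ := by
  unfold torusCoord
  split_ifs with h1 h2
  · rw [← mul_sub, abs_mul, abs_of_nonneg hs, ← Complex.sub_re]
    exact mul_le_mul_of_nonneg_left ((Complex.abs_re_le_norm _).trans (h _)) hs
  · rw [← mul_sub, abs_mul, abs_of_nonneg hs, ← Complex.sub_im]
    exact mul_le_mul_of_nonneg_left ((Complex.abs_im_le_norm _).trans (h _)) hs
  · simpa using mul_nonneg hs hδ

lemma char_step {l : ℕ} (hl : 0 < l) [NeZero (4 * l)] (a : ZMod (4 * l)) :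
    ‖(ZMod.stdAddChar (a + 1) : ℂ) - ZMod.stdAddChar a‖ ≤ 2 / l := by
  have hl' : (0 : ℝ) < l := by exact_mod_cast hl
  rw [AddChar.map_add_eq_mul]
  have h1 : ‖(ZMod.stdAddChar (1 : ZMod (4 * l)) : ℂ) - 1‖ ≤ 2 / l := by
    have h2 := ZMod.stdAddChar_coe (N := 4 * l) 1
    rw [Int.cast_one] at h2
    have h3 : (2 * (Real.pi : ℂ) * Complex.I * ((1 : ℤ) : ℂ) / ((4 * l : ℕ) : ℂ))
        = Complex.I * ((2 * Real.pi / (4 * l) : ℝ) : ℂ) := by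
      push_cast; ring
    rw [h2, h3]
    refine Real.norm_exp_I_mul_ofReal_sub_one_le.trans ?_
    rw [Real.norm_of_nonneg (by positivity), div_le_div_iff₀ (by positivity) hl']
    nlinarith [Real.pi_le_four]
  calc _ = ‖(ZMod.stdAddChar a : ℂ) * ((ZMod.stdAddChar (1 : ZMod (4 * l)) : ℂ) - 1)‖ := by
        congr 1; ring
    _ ≤ 2 / l := by rw [norm_mul, AddChar.norm_apply, one_mul]; exact h1

lemma char_half {l : ℕ} (hl : 0 < l) [NeZero (4 * l)] (a : ZMod (4 * l)) :
    (ZMod.stdAddChar (a + ((2 * l : ℕ) : ZMod (4 * l))) : ℂ) = - ZMod.stdAddChar a := by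
  rw [AddChar.map_add_eq_mul]
  have h2 := ZMod.stdAddChar_coe (N := 4 * l) ((2 * l : ℕ) : ℤ)
  have hl' : (l : ℂ) ≠ 0 := by exact_mod_cast hl.ne'
  have h3 : (2 * (Real.pi : ℂ) * Complex.I * ((((2 * l : ℕ) : ℤ)) : ℂ) / ((4 * l : ℕ) : ℂ))
        = Real.pi * Complex.I := by
      push_cast; field_simp; ring
  rw [h3, Complex.exp_pi_mul_I, Int.cast_natCast] at h2
  rw [h2]; ring

lemma torusCoord_far {n l : ℕ} (hl : 0 < l) [NeZero (4 * l)] {s : ℝ} (hs : 0 ≤ s)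
    (x : Fin n → ZMod (4 * l)) (j : Fin n) :
    ∃ i, s ≤ |torusCoord n (4 * l) s (x + Pi.single j ((2 * l : ℕ) : ZMod (4 * l))) i
      - torusCoord n (4 * l) s x i| := by
  set w : ℂ := ZMod.stdAddChar (x j) with hw
  have hw1 : ‖w‖ = 1 := AddChar.norm_apply _ _
  have h1 : w.re * w.re + w.im * w.im = 1 := by
    rw [← Complex.normSq_apply, Complex.normSq_eq_norm_sq, hw1]; norm_num
  have h2 : (1 / 2 ≤ |w.re|) ∨ (1 / 2 ≤ |w.im|) := by
    by_contra hcon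
    push Not at hcon
    have := abs_mul_abs_self w.re
    have := abs_mul_abs_self w.im
    nlinarith [abs_nonneg w.re, abs_nonneg w.im]
  rcases h2 with h2 | h2
  · refine ⟨j, ?_⟩
    unfold torusCoord
    rw [dif_pos j.2, dif_pos j.2]
    simp only [Fin.eta, Pi.add_apply, Pi.single_eq_same]
    rw [char_half hl, ← hw, ← mul_sub, abs_mul, abs_of_nonneg hs, Complex.neg_re,
      show -w.re - w.re = -(2 * w.re) by ring, abs_neg, abs_mul, abs_two]
    nlinarith
  · refine ⟨n + j, ?_⟩
    have e : n + (j : ℕ) - n = j := by omega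
    have e2 : n + (j : ℕ) - n < n := by omega
    have e3 : ¬ n + (j : ℕ) < n := by omega
    unfold torusCoord
    rw [dif_neg e3, dif_neg e3, dif_pos e2, dif_pos e2]
    simp only [e, Fin.eta, Pi.add_apply, Pi.single_eq_same]
    rw [char_half hl, ← hw, ← mul_sub, abs_mul, abs_of_nonneg hs, Complex.neg_im,
      show -w.im - w.im = -(2 * w.im) by ring, abs_neg, abs_mul, abs_two]
    nlinarith

lemma torusCoord_mem {n m : ℕ} [NeZero m] (s : ℝ) (x : Fin n → ZMod m) {p : ℝ} (hp : 2 < p) :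
    Memℓp (E := fun _ : ℕ => ℝ) (torusCoord n m s x) (ENNReal.ofReal p) := by
  refine memℓp_gen (summable_of_ne_finset_zero (s := Finset.range (2 * n)) fun i hi => ?_)
  rw [torusCoord_zero hi, norm_zero, Real.zero_rpow]
  rw [ENNReal.toReal_ofReal (by linarith)]
  linarith

lemma norm_le_aux {p s : ℝ} (hp : 2 < p) {l : ℕ} (hl : 0 < l) (hs : s = (l : ℝ) ^ ((p - 2) / p))
    [Fact (1 ≤ ENNReal.ofReal p)]
    (D : lp (fun _ : ℕ => ℝ) (ENNReal.ofReal p))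
    (h0 : ∀ i, i ∉ Finset.range (2 * l ^ 2) → D i = 0) (h1 : ∀ i, |D i| ≤ s * (2 / l)) :
    ‖D‖ ≤ 4 := by
  have hl' : (0 : ℝ) < l := by exact_mod_cast hl
  have hp0 : 0 < p := by linarith
  have hpt : (ENNReal.ofReal p).toReal = p := ENNReal.toReal_ofReal (by linarith)
  have h := lp.norm_rpow_eq_tsum (by rw [hpt]; linarith) D
  rw [hpt] at h
  rw [tsum_eq_sum (s := Finset.range (2 * l ^ 2)) (fun i hi => by
    rw [h0 i hi, norm_zero, Real.zero_rpow hp0.ne'])] at h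
  have hs0 : 0 ≤ s := by rw [hs]; positivity
  have h2 : ‖D‖ ^ p ≤ 2 * (l : ℝ) ^ 2 * (s * (2 / l)) ^ p := by
    rw [h]
    refine (Finset.sum_le_card_nsmul _ _ ((s * (2 / l)) ^ p) fun i _ => ?_).trans ?_
    · exact Real.rpow_le_rpow (norm_nonneg _) (h1 i) hp0.le
    · simp
  have h3 : (l : ℝ) ^ 2 * (s * (2 / l)) ^ p = 2 ^ p := by
    rw [Real.mul_rpow hs0 (by positivity), Real.div_rpow (by norm_num) hl'.le, hs,
      ← Real.rpow_mul hl'.le, div_mul_cancel₀ _ hp0.ne', Real.rpow_sub hl', Real.rpow_two]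
    have : (l : ℝ) ^ p ≠ 0 := by positivity
    field_simp
  have h4 : (2 : ℝ) ≤ 2 ^ p := by
    simpa using Real.rpow_le_rpow_of_exponent_le (x := 2) (by norm_num) (show (1 : ℝ) ≤ p by linarith)
  have h5 : (4 : ℝ) ^ p = 2 ^ p * 2 ^ p := by
    rw [← Real.mul_rpow (by norm_num) (by norm_num)]; norm_num
  have h6 : ‖D‖ ^ p ≤ 4 ^ p := by
    rw [h5]
    refine h2.trans ?_
    rw [mul_assoc, h3]
    exact mul_le_mul_of_nonneg_right h4 (by positivity)
  exact (Real.rpow_le_rpow_iff (norm_nonneg _) (by norm_num) hp0).mp h6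

/-- Randrianarivony's corollary: for `2 < p < ∞`, the space `ℓ^p` of `p`-summable real
sequences does not coarsely embed into the Hilbert space `ℓ²`. -/
theorem lp_no_coarse_embedding_into_l2 (p : ℝ) (hp : 2 < p) :
    haveI : Fact (1 ≤ ENNReal.ofReal p) := ⟨ENNReal.one_le_ofReal.mpr (by linarith)⟩
    ¬ ∃ f : lp (fun _ : ℕ => ℝ) (ENNReal.ofReal p) → lp (fun _ : ℕ => ℝ) 2,
      CoarseEmbedding f := by
  have hfact : Fact (1 ≤ ENNReal.ofReal p) := ⟨ENNReal.one_le_ofReal.mpr (by linarith)⟩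
  rintro ⟨f, ρm, ρp, hm, hpm, htend, hf⟩
  have hp0 : 0 < p := by linarith
  -- the key bound
  have key : ∀ l : ℕ, 0 < l →
      (ρm (Real.toNNReal ((l : ℝ) ^ ((p - 2) / p))) : ℝ) ^ 2 ≤ 8 * (ρp 4 : ℝ) ^ 2 := by
    intro l hl
    have hl' : (0 : ℝ) < l := by exact_mod_cast hl
    have : NeZero (4 * l) := ⟨by omega⟩
    set s : ℝ := (l : ℝ) ^ ((p - 2) / p) with hs
    have hs0 : 0 ≤ s := by positivity
    obtain ⟨F, hF⟩ : ∃ F : (Fin (l ^ 2) → ZMod (4 * l)) →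
        lp (fun _ : ℕ => ℝ) (ENNReal.ofReal p), ∀ x y i,
        (F x - F y : lp (fun _ : ℕ => ℝ) (ENNReal.ofReal p)) i
        = torusCoord (l ^ 2) (4 * l) s x i - torusCoord (l ^ 2) (4 * l) s y i :=
      ⟨fun x => ⟨torusCoord (l ^ 2) (4 * l) s x, torusCoord_mem s x hp⟩, fun _ _ _ => rfl⟩
    have hne : ENNReal.ofReal p ≠ 0 := by simpa using hp0
    have hcot := cotype_l2 (n := l ^ 2) hl le_rfl (fun x => f (F x))
    have hlow : ∀ x j, (ρm (Real.toNNReal s) : ℝ) ^ 2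
        ≤ ‖f (F (x + Pi.single j ((2 * l : ℕ) : ZMod (4 * l)))) - f (F x)‖ ^ 2 := by
      intro x j
      obtain ⟨i, hi⟩ := torusCoord_far hl hs0 x j
      refine pow_le_pow_left₀ (NNReal.coe_nonneg _) ?_ 2
      rw [← dist_eq_norm, ← coe_nndist]
      refine NNReal.coe_le_coe.mpr ((hm ?_).trans (hf _ _).1)
      rw [Real.toNNReal_le_iff_le_coe, coe_nndist, dist_eq_norm]
      have h5 := lp.norm_apply_le_norm hne
        (F (x + Pi.single j ((2 * l : ℕ) : ZMod (4 * l))) - F x) i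
      rw [hF, Real.norm_eq_abs] at h5
      exact hi.trans h5
    have hup : ∀ x b, ‖f (F (x + sgnVec (l ^ 2) (4 * l) b)) - f (F x)‖ ^ 2 ≤ (ρp 4 : ℝ) ^ 2 := by
      intro x b
      refine pow_le_pow_left₀ (norm_nonneg _) ?_ 2
      rw [← dist_eq_norm, ← coe_nndist]
      refine NNReal.coe_le_coe.mpr ((hf _ _).2.trans (hpm ?_))
      rw [← NNReal.coe_le_coe, coe_nndist, dist_eq_norm]
      refine norm_le_aux hp hl hs _ (fun i hi => ?_) (fun i => ?_)
      · rw [hF, torusCoord_zero hi, torusCoord_zero hi, sub_zero]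
      · rw [hF]
        refine torusCoord_diff hs0 (by positivity) (fun j => ?_) i
        rw [Pi.add_apply]
        unfold sgnVec
        split_ifs
        · exact char_step hl _
        · have := char_step hl (x j + -1)
          rwa [neg_add_cancel_right, norm_sub_rev] at this
    set c : ℝ := ((Fintype.card (Fin (l ^ 2) → ZMod (4 * l)) : ℕ) : ℝ) with hc
    have hc0 : 0 < c := by rw [hc]; exact_mod_cast Fintype.card_pos
    have hA : (l : ℝ) ^ 2 * (c * (ρm (Real.toNNReal s) : ℝ) ^ 2)
        ≤ ∑ j, ∑ x, ‖f (F (x + Pi.single j ((2 * l : ℕ) : ZMod (4 * l)))) - f (F x)‖ ^ 2 := by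
      refine le_trans (le_of_eq ?_)
        (Finset.sum_le_sum fun j _ => Finset.sum_le_sum fun x _ => hlow x j)
      rw [Finset.sum_const, Finset.sum_const, nsmul_eq_mul, nsmul_eq_mul, Finset.card_univ,
        Finset.card_univ, Fintype.card_fin, Nat.cast_pow]
    have hB : ∑ b, ∑ x, ‖f (F (x + sgnVec (l ^ 2) (4 * l) b)) - f (F x)‖ ^ 2
        ≤ 2 ^ (l ^ 2) * (c * (ρp 4 : ℝ) ^ 2) := by
      refine le_trans (Finset.sum_le_sum fun b _ => Finset.sum_le_sum fun x _ => hup x b)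
        (le_of_eq ?_)
      rw [Finset.sum_const, Finset.sum_const, nsmul_eq_mul, nsmul_eq_mul, Finset.card_univ,
        Finset.card_univ, Fintype.card_fun, Fintype.card_fin, Fintype.card_bool, Nat.cast_pow,
        Nat.cast_ofNat]
    have h2 : (0 : ℝ) < 2 ^ (l ^ 2) := by positivity
    have hC := ((mul_le_mul_of_nonneg_left hA h2.le).trans hcot).trans
      (mul_le_mul_of_nonneg_left hB (by positivity))
    have hK : 0 < 2 ^ (l ^ 2) * (l : ℝ) ^ 2 * c := by positivity
    refine le_of_mul_le_mul_left ?_ hK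
    calc _ = 2 ^ (l ^ 2) * ((l : ℝ) ^ 2 * (c * (ρm (Real.toNNReal s) : ℝ) ^ 2)) := by ring
      _ ≤ _ := hC
      _ = _ := by ring
  have hexp : 0 < (p - 2) / p := div_pos (by linarith) hp0
  have ht : Tendsto (fun l : ℕ => ρm (Real.toNNReal ((l : ℝ) ^ ((p - 2) / p)))) atTop atTop :=
    htend.comp (Real.tendsto_toNNReal_atTop.comp
      ((tendsto_rpow_atTop hexp).comp tendsto_natCast_atTop_atTop))
  obtain ⟨l, hl1, hl2⟩ := ((ht.eventually_ge_atTop (3 * ρp 4 + 1)).and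
    (eventually_gt_atTop 0)).exists
  have h1 := key l hl2
  have h3 : (3 * (ρp 4 : ℝ) + 1) ≤ ρm (Real.toNNReal ((l : ℝ) ^ ((p - 2) / p))) := by
    exact_mod_cast hl1
  have h4 : (0 : ℝ) ≤ ρp 4 := NNReal.coe_nonneg _
  nlinarith
end

section
/- Let p be a real number with 2 < p < ∞. There do not exist non-decreasing functions ρ₋, ρ₊ : [0,∞) → [0,∞) with ρ₋(t) → ∞ as t → ∞ such that for every natural number d and every finite subset A of ℝ^d equipped with the ℓ^p norm, there is a map f_A : A → ℓ² satisfying ρ₋(‖x − y‖_p) ≤ ‖f_A(x) − f_A(y)‖₂ ≤ ρ₊(‖x − y‖_p) for all x, y ∈ A. -/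
open Filter
open scoped NNReal ENNReal

/-- averaging operator over the sub-cube directions in `s`. -/
noncomputable def cubeAvg {ι G H : Type*} [AddCommGroup G] [NormedAddCommGroup H]
    [InnerProductSpace ℝ H] (e : ι → G) (g : G → H) (s : Finset ι) (x : G) : H :=
  ((1 / 2 : ℝ) ^ s.card) • ∑ t ∈ s.powerset, g (x + ∑ i ∈ t, e i)

section Aux
variable {ι G H : Type*} [AddCommGroup G] [NormedAddCommGroup H] [InnerProductSpace ℝ H]

theorem cubeAvg_insert [DecidableEq ι] (e : ι → G) (g : G → H) (s : Finset ι) (j : ι)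
    (hj : j ∉ s) (x : G) :
    cubeAvg e g (insert j s) x = (1 / 2 : ℝ) • (cubeAvg e g s x + cubeAvg e g s (x + e j)) := by
  unfold cubeAvg
  rw [Finset.sum_powerset_insert hj, Finset.card_insert_of_notMem hj, ← smul_add, smul_smul,
    pow_succ', ]
  congr 2
  apply Finset.sum_congr rfl
  intro t ht
  have : j ∉ t := fun h => hj (Finset.mem_powerset.mp ht h)
  rw [Finset.sum_insert this, add_assoc]

theorem cubeAvg_sub_le (e : ι → G) (g : G → H) (s : Finset ι) (x : G) (K : ℝ)
    (hK : ∀ (x : G) (t : Finset ι), ‖g (x + ∑ i ∈ t, e i) - g x‖ ≤ K) :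
    ‖cubeAvg e g s x - g x‖ ≤ K := by
  have h1 : cubeAvg e g s x - g x
      = ((1 / 2 : ℝ) ^ s.card) • ∑ t ∈ s.powerset, (g (x + ∑ i ∈ t, e i) - g x) := by
    unfold cubeAvg
    rw [Finset.sum_sub_distrib, smul_sub, Finset.sum_const, Finset.card_powerset,
      ← Nat.cast_smul_eq_nsmul ℝ, smul_smul]
    simp
  rw [h1, norm_smul, Real.norm_of_nonneg (by positivity)]
  have h2 : ‖∑ t ∈ s.powerset, (g (x + ∑ i ∈ t, e i) - g x)‖ ≤ (2 : ℝ) ^ s.card * K := by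
    refine (norm_sum_le_of_le _ (fun t _ => hK x t)).trans ?_
    simp
  calc _ ≤ (1 / 2 : ℝ) ^ s.card * ((2 : ℝ) ^ s.card * K) := by gcongr
    _ = K := by rw [← mul_assoc, ← mul_pow]; norm_num

theorem cubeAvg_var (e : ι → G) (g : G → H) (s : Finset ι) (x : G) (K : ℝ)
    (hK : ∀ (x : G) (t : Finset ι), ‖g (x + ∑ i ∈ t, e i) - g x‖ ≤ K) :
    ((1 / 2 : ℝ) ^ s.card) * ∑ t ∈ s.powerset, ‖g (x + ∑ i ∈ t, e i)‖ ^ 2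
      ≤ ‖cubeAvg e g s x‖ ^ 2 + K ^ 2 := by
  have hK0 : 0 ≤ K := (norm_nonneg _).trans (hK x ∅)
  have hw : (1 / 2 : ℝ) ^ s.card * (2 : ℝ) ^ s.card = 1 := by rw [← mul_pow]; norm_num
  have h1 : ((1 / 2 : ℝ) ^ s.card) * ∑ t ∈ s.powerset, ‖g (x + ∑ i ∈ t, e i) - g x‖ ^ 2
      ≤ K ^ 2 := by
    have : ∑ t ∈ s.powerset, ‖g (x + ∑ i ∈ t, e i) - g x‖ ^ 2 ≤ (2 : ℝ) ^ s.card * K ^ 2 := by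
      refine (Finset.sum_le_sum (fun t _ => pow_le_pow_left₀ (norm_nonneg _) (hK x t) 2)).trans ?_
      simp
    calc _ ≤ (1 / 2 : ℝ) ^ s.card * ((2 : ℝ) ^ s.card * K ^ 2) := by gcongr
      _ = K ^ 2 := by rw [← mul_assoc, hw, one_mul]
  have h2 : ((1 / 2 : ℝ) ^ s.card) * ∑ t ∈ s.powerset, ‖g (x + ∑ i ∈ t, e i) - g x‖ ^ 2
      = ((1 / 2 : ℝ) ^ s.card) * ∑ t ∈ s.powerset, ‖g (x + ∑ i ∈ t, e i)‖ ^ 2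
        - 2 * inner ℝ (cubeAvg e g s x) (g x) + ‖g x‖ ^ 2 := by
    unfold cubeAvg
    simp_rw [norm_sub_sq_real]
    rw [Finset.sum_add_distrib, Finset.sum_sub_distrib, inner_smul_left, sum_inner,
      ← Finset.mul_sum]
    simp only [Finset.sum_const, Finset.card_powerset, nsmul_eq_mul, conj_trivial]
    push_cast
    linear_combination ‖g x‖ ^ 2 * hw
  have h3 := norm_sub_sq_real (cubeAvg e g s x) (g x)
  have h4 := sq_nonneg ‖cubeAvg e g s x - g x‖
  linarith

variable [Fintype G]

theorem sum_shift (F : G → ℝ) (a : G) : ∑ x, F (x + a) = ∑ x, F x :=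
  Fintype.sum_equiv (Equiv.addRight a) _ _ (fun _ => rfl)

theorem cubeAvg_energy (e : ι → G) (g : G → H) (s : Finset ι) (K : ℝ)
    (hK : ∀ (x : G) (t : Finset ι), ‖g (x + ∑ i ∈ t, e i) - g x‖ ≤ K) :
    ∑ x, ‖g x‖ ^ 2 ≤ ∑ x, ‖cubeAvg e g s x‖ ^ 2 + Fintype.card G * K ^ 2 := by
  have h := Finset.sum_le_sum (fun x (_ : x ∈ Finset.univ) => cubeAvg_var e g s x K hK)
  rw [← Finset.mul_sum, Finset.sum_comm] at h
  have h2 : ∀ t ∈ s.powerset, ∑ x, ‖g (x + ∑ i ∈ t, e i)‖ ^ 2 = ∑ x, ‖g x‖ ^ 2 :=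
    fun t _ => sum_shift (fun x => ‖g x‖ ^ 2) _
  rw [Finset.sum_congr rfl h2, Finset.sum_add_distrib] at h
  simp only [Finset.sum_const, Finset.card_powerset, nsmul_eq_mul, Finset.card_univ] at h
  push_cast at h
  have hw : (1 / 2 : ℝ) ^ s.card * (2 : ℝ) ^ s.card = 1 := by rw [← mul_pow]; norm_num
  rw [← mul_assoc, hw, one_mul] at h
  exact h

theorem half_energy (g : G → H) (e : G) :
    ∑ x, ‖(1 / 2 : ℝ) • (g x + g (x + e))‖ ^ 2
      = ∑ x, ‖g x‖ ^ 2 - (1 / 4) * ∑ x, ‖g (x + e) - g x‖ ^ 2 := by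
  have h := sum_shift (fun x => ‖g x‖ ^ 2) e
  have h1 : ∀ x, ‖(1 / 2 : ℝ) • (g x + g (x + e))‖ ^ 2
      = (1 / 2) * ‖g x‖ ^ 2 + (1 / 2) * ‖g (x + e)‖ ^ 2 - (1 / 4) * ‖g (x + e) - g x‖ ^ 2 := by
    intro x
    rw [norm_smul, mul_pow, norm_add_sq_real, norm_sub_sq_real, real_inner_comm]
    norm_num
    ring
  simp_rw [h1]
  rw [Finset.sum_sub_distrib, Finset.sum_add_distrib, ← Finset.mul_sum, ← Finset.mul_sum,
    ← Finset.mul_sum, h]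
  ring

theorem multi_step (g : G → H) (e : G) (k : ℕ) :
    ∑ x, ‖g (x + k • e) - g x‖ ^ 2 ≤ (k : ℝ) ^ 2 * ∑ x, ‖g (x + e) - g x‖ ^ 2 := by
  have h1 : ∀ x, ‖g (x + k • e) - g x‖ ^ 2
      ≤ k * ∑ i ∈ Finset.range k, ‖g (x + i • e + e) - g (x + i • e)‖ ^ 2 := by
    intro x
    have h2 : g (x + k • e) - g x
        = ∑ i ∈ Finset.range k, (g (x + i • e + e) - g (x + i • e)) := by
      have := Finset.sum_range_sub (fun i => g (x + i • e)) k
      simp only [zero_smul, add_zero] at this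
      rw [← this]
      simp only [succ_nsmul, add_assoc]
    have h3 := sq_sum_le_card_mul_sum_sq (s := Finset.range k)
      (f := fun i => ‖g (x + i • e + e) - g (x + i • e)‖)
    rw [Finset.card_range] at h3
    refine le_trans ?_ h3
    rw [h2]
    exact pow_le_pow_left₀ (norm_nonneg _) (norm_sum_le _ _) 2
  refine (Finset.sum_le_sum (fun x _ => h1 x)).trans ?_
  rw [← Finset.mul_sum, Finset.sum_comm]
  have h4 : ∀ i ∈ Finset.range k, ∑ x, ‖g (x + i • e + e) - g (x + i • e)‖ ^ 2
      = ∑ x, ‖g (x + e) - g x‖ ^ 2 :=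
    fun i _ => sum_shift (fun x => ‖g (x + e) - g x‖ ^ 2) _
  rw [Finset.sum_congr rfl h4]
  simp only [Finset.sum_const, Finset.card_range, nsmul_eq_mul]
  apply le_of_eq
  ring

theorem cotype_bound [DecidableEq ι] (e : ι → G) (g : G → H) (K L : ℝ) (k : ℕ)
    (hLK : 2 * K ≤ L)
    (hK : ∀ (x : G) (t : Finset ι), ‖g (x + ∑ i ∈ t, e i) - g x‖ ≤ K)
    (hL : ∀ (x : G) (j : ι), L ≤ ‖g (x + k • e j) - g x‖) (s : Finset ι) :
    s.card * (L - 2 * K) ^ 2 ≤ 4 * (k : ℝ) ^ 2 * K ^ 2 := by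
  have key : 4 * (k : ℝ) ^ 2 * ∑ x, ‖cubeAvg e g s x‖ ^ 2
      + s.card * (Fintype.card G * (L - 2 * K) ^ 2) ≤ 4 * (k : ℝ) ^ 2 * ∑ x, ‖g x‖ ^ 2 := by
    induction s using Finset.induction_on with
    | empty => simp [cubeAvg]
    | insert j s hj ih =>
      have h1 := half_energy (cubeAvg e g s) (e j)
      have h2 := multi_step (cubeAvg e g s) (e j) k
      have h3 : Fintype.card G * (L - 2 * K) ^ 2
          ≤ ∑ x, ‖cubeAvg e g s (x + k • e j) - cubeAvg e g s x‖ ^ 2 := by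
        rw [← nsmul_eq_mul, ← Finset.card_univ, ← Finset.sum_const]
        apply Finset.sum_le_sum
        intro x _
        apply pow_le_pow_left₀ (by linarith)
        have a1 := cubeAvg_sub_le e g s x K hK
        have a2 := cubeAvg_sub_le e g s (x + k • e j) K hK
        have a3 := hL x j
        have a4 : g (x + k • e j) - g x = (cubeAvg e g s (x + k • e j) - cubeAvg e g s x)
          + (cubeAvg e g s x - g x) - (cubeAvg e g s (x + k • e j) - g (x + k • e j)) := by
          abel
        have a5 := norm_sub_le ((cubeAvg e g s (x + k • e j) - cubeAvg e g s x)
          + (cubeAvg e g s x - g x)) (cubeAvg e g s (x + k • e j) - g (x + k • e j))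
        have a6 := norm_add_le (cubeAvg e g s (x + k • e j) - cubeAvg e g s x)
          (cubeAvg e g s x - g x)
        rw [← a4] at a5
        linarith
      simp_rw [cubeAvg_insert e g s j hj]
      rw [h1, Finset.card_insert_of_notMem hj]
      push_cast
      nlinarith
  have h5 := cubeAvg_energy e g s K hK
  have hc : (0 : ℝ) < Fintype.card G := by
    have : 0 < Fintype.card G := Fintype.card_pos_iff.mpr ⟨0⟩
    exact_mod_cast this
  have h6 : 4 * (k : ℝ) ^ 2 * ∑ x, ‖g x‖ ^ 2 ≤ 4 * (k : ℝ) ^ 2 *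
    (∑ x, ‖cubeAvg e g s x‖ ^ 2 + Fintype.card G * K ^ 2) := by gcongr
  refine le_of_mul_le_mul_left ?_ hc
  nlinarith

end Aux

/-- distance to `0` on the cycle of length `4k`. -/
def cyc (k : ℕ) (x : ZMod (4 * k)) : ℤ := min (x.val : ℤ) (4 * k - x.val)

theorem cyc_step (k : ℕ) (hk : 1 ≤ k) (x : ZMod (4 * k)) : |cyc k (x + 1) - cyc k x| ≤ 1 := by
  haveI : NeZero (4 * k) := ⟨by omega⟩
  haveI : Fact (1 < 4 * k) := ⟨by omega⟩
  have hx := x.val_lt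
  unfold cyc
  rw [ZMod.val_add, ZMod.val_one]
  rcases lt_or_ge (x.val + 1) (4 * k) with h | h
  · rw [Nat.mod_eq_of_lt h]; push_cast; grind
  · have : x.val + 1 = 4 * k := by omega
    rw [this, Nat.mod_self]; push_cast; grind

theorem zval_add (k : ℕ) (hk : 1 ≤ k) (x : ZMod (4 * k)) (c : ℕ) (hc : c < 4 * k) :
    ((x + (c : ZMod (4 * k))).val = x.val + c ∧ x.val + c < 4 * k) ∨
    ((x + (c : ZMod (4 * k))).val + 4 * k = x.val + c ∧ 4 * k ≤ x.val + c) := by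
  haveI : NeZero (4 * k) := ⟨by omega⟩
  have hx := x.val_lt
  rw [ZMod.val_add, ZMod.val_natCast, Nat.mod_eq_of_lt hc]
  rcases lt_or_ge (x.val + c) (4 * k) with h | h
  · left; exact ⟨Nat.mod_eq_of_lt h, h⟩
  · right
    refine ⟨?_, h⟩
    rw [Nat.mod_eq_sub_mod h, Nat.mod_eq_of_lt (by omega)]
    omega

theorem cyc_far (k : ℕ) (hk : 1 ≤ k) (x : ZMod (4 * k)) :
    (k : ℤ) ≤ |cyc k (x + (2 * k : ℕ)) - cyc k x| ∨
    (k : ℤ) ≤ |cyc k (x + (2 * k : ℕ) + (k : ℕ)) - cyc k (x + (k : ℕ))| := by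
  haveI : NeZero (4 * k) := ⟨by omega⟩
  have hx := x.val_lt
  have h1 := zval_add k hk x k (by omega)
  have h2 := zval_add k hk x (2 * k) (by omega)
  have h3 := zval_add k hk (x + (2 * k : ℕ)) k (by omega)
  unfold cyc
  generalize (x + (2 * k : ℕ) + (k : ℕ)).val = a at *
  generalize (x + (2 * k : ℕ)).val = b at *
  generalize (x + (k : ℕ)).val = c at *
  generalize x.val = v at *
  by_contra hcon
  push Not at hcon
  rw [abs_lt, abs_lt] at hcon
  omega

theorem lp_cycle_map (p : ℝ) (hp : 2 < p) [Fact (1 ≤ ENNReal.ofReal p)] (n k : ℕ) (hk : 1 ≤ k)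
    (s : ℝ) (hs : 0 ≤ s) (hs1 : (2 * n : ℝ) * s ^ p ≤ 1) :
    ∃ (d : ℕ) (Φ : (Fin n → ZMod (4 * k)) → PiLp (ENNReal.ofReal p) (fun _ : Fin d => ℝ)),
      (∀ x (t : Finset (Fin n)), dist (Φ (x + ∑ i ∈ t, Pi.single i 1)) (Φ x) ≤ 1) ∧
      (∀ x (j : Fin n), s * k ≤ dist (Φ (x + (2 * k) • Pi.single j 1)) (Φ x)) := by
  have hpt : (ENNReal.ofReal p).toReal = p := ENNReal.toReal_ofReal (by linarith)
  let E := Fintype.equivFin (Fin n × Fin 2)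
  let c : Fin 2 → ℕ := ![0, k]
  let Φ : (Fin n → ZMod (4 * k)) →
      PiLp (ENNReal.ofReal p) (fun _ : Fin (Fintype.card (Fin n × Fin 2)) => ℝ) :=
    fun x => WithLp.toLp _ (fun i => s * (cyc k (x (E.symm i).1 + (c (E.symm i).2 : ℕ)) : ℝ))
  refine ⟨_, Φ, ?_, ?_⟩
  · intro x t
    rw [PiLp.dist_eq_sum (by rw [hpt]; linarith), hpt]
    apply Real.rpow_le_one (Finset.sum_nonneg fun i _ => Real.rpow_nonneg dist_nonneg _) _
      (by positivity)
    have hb : ∀ i ∈ Finset.univ, (dist (Φ (x + ∑ i ∈ t, Pi.single i 1) i) (Φ x i)) ^ p ≤ s ^ p := by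
      intro i _
      apply Real.rpow_le_rpow dist_nonneg _ (by linarith)
      simp only [Φ, Real.dist_eq, ← mul_sub, abs_mul, abs_of_nonneg hs]
      apply mul_le_of_le_one_right hs
      generalize E.symm i = q
      have hcoord : (x + ∑ i ∈ t, (Pi.single i 1 : Fin n → ZMod (4 * k))) q.1
          = x q.1 + if q.1 ∈ t then 1 else 0 := by
        rw [Pi.add_apply, Finset.sum_apply, Finset.sum_pi_single]
      rw [hcoord]
      split_ifs
      · have := cyc_step k hk (x q.1 + (c q.2 : ℕ))
        rw [add_right_comm]
        exact_mod_cast this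
      · simp
    refine (Finset.sum_le_sum hb).trans ?_
    simp only [Finset.sum_const, Finset.card_univ, Fintype.card_prod, Fintype.card_fin,
      nsmul_eq_mul]
    push_cast
    linarith
  · intro x j
    have hcoord : (x + (2 * k) • (Pi.single j 1 : Fin n → ZMod (4 * k))) j
          = x j + (2 * k : ℕ) := by
      simp
    have hd : ∀ q : Fin 2, s * |(cyc k (x j + (2 * k : ℕ) + (c q : ℕ)) : ℝ)
        - cyc k (x j + (c q : ℕ))| ≤ dist (Φ (x + (2 * k) • Pi.single j 1)) (Φ x) := by
      intro q
      have h := PiLp.norm_apply_le (Φ (x + (2 * k) • Pi.single j 1) - Φ x) (E (j, q))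
      rw [← dist_eq_norm] at h
      refine le_trans (le_of_eq ?_) h
      rw [PiLp.sub_apply]
      simp only [Φ, Equiv.symm_apply_apply, hcoord, ← mul_sub, Real.norm_eq_abs, abs_mul,
        abs_of_nonneg hs]
    rcases cyc_far k hk (x j) with h | h
    · refine le_trans ?_ (hd 0)
      gcongr
      simp only [c, Matrix.cons_val_zero, Nat.cast_zero, add_zero]
      exact_mod_cast h
    · refine le_trans ?_ (hd 1)
      gcongr
      simp only [c, Matrix.cons_val_one, Matrix.cons_val_zero]
      exact_mod_cast h

theorem exists_scale (p : ℝ) (hp : 2 < p) (R : ℝ) :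
    ∃ (k : ℕ) (s : ℝ), 1 ≤ k ∧ 0 ≤ s ∧ (2 * ((4 * k ^ 2 : ℕ) : ℝ)) * s ^ p ≤ 1 ∧ R ≤ s * k := by
  have h1 : Tendsto (fun k : ℕ => (8 : ℝ) ^ (-1 / p) * (k : ℝ) ^ (1 - 2 / p)) atTop atTop := by
    apply Tendsto.const_mul_atTop (by positivity)
    refine (tendsto_rpow_atTop ?_).comp tendsto_natCast_atTop_atTop
    rw [sub_pos, div_lt_one (by linarith)]
    exact hp
  obtain ⟨k, hk, hk1⟩ := ((h1.eventually_ge_atTop R).and (eventually_ge_atTop 1)).exists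
  have hk0 : (0 : ℝ) < k := by exact_mod_cast hk1
  have hp0 : p ≠ 0 := by linarith
  refine ⟨k, (8 : ℝ) ^ (-1 / p) * (k : ℝ) ^ (-2 / p), hk1, by positivity, ?_, ?_⟩
  · rw [Real.mul_rpow (by positivity) (by positivity), ← Real.rpow_mul (by positivity),
      ← Real.rpow_mul (by positivity), div_mul_cancel₀ _ hp0, div_mul_cancel₀ _ hp0,
      Real.rpow_neg_one, Real.rpow_neg hk0.le, Real.rpow_ofNat]
    push_cast
    apply le_of_eq
    field_simp
    norm_num
  · refine hk.trans (le_of_eq ?_)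
    rw [mul_assoc]
    congr 1
    nth_rewrite 3 [← Real.rpow_one (k : ℝ)]
    rw [← Real.rpow_add hk0]
    congr 1
    ring


/-- For `2 < p < ∞`, the finite subsets of the spaces `(ℝ^d, ‖·‖_p)`, taken over all
dimensions `d`, cannot be mapped into the Hilbert space `ℓ²` with uniform distortion
functions `ρ₋, ρ₊ : [0,∞) → [0,∞)` (non-decreasing, with `ρ₋(t) → ∞`). -/
theorem no_uniform_finite_embeddings_of_lp_subsets (p : ℝ) (hp : 2 < p) :
    haveI : Fact (1 ≤ ENNReal.ofReal p) := ⟨ENNReal.one_le_ofReal.mpr (by linarith)⟩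
    ¬ ∃ ρminus ρplus : ℝ≥0 → ℝ≥0,
      Monotone ρminus ∧ Monotone ρplus ∧
      Tendsto ρminus atTop atTop ∧
      ∀ (d : ℕ) (A : Finset (PiLp (ENNReal.ofReal p) (fun _ : Fin d => ℝ))),
        ∃ fA : PiLp (ENNReal.ofReal p) (fun _ : Fin d => ℝ) → lp (fun _ : ℕ => ℝ) 2,
          ∀ x ∈ A, ∀ y ∈ A,
            ρminus (nndist x y) ≤ nndist (fA x) (fA y) ∧
            nndist (fA x) (fA y) ≤ ρplus (nndist x y) := by
  haveI hfact : Fact (1 ≤ ENNReal.ofReal p) := ⟨ENNReal.one_le_ofReal.mpr (by linarith)⟩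
  rintro ⟨ρm, ρp, -, hmp, htop, hemb⟩
  obtain ⟨R, hR⟩ := (eventually_atTop.mp (htop.eventually_ge_atTop (4 * ρp 1 + 1)))
  obtain ⟨k, s, hk, hs, hs1, hRs⟩ := exists_scale p hp R
  obtain ⟨d, Φ, hup, hlow⟩ := lp_cycle_map p hp (4 * k ^ 2) k hk s hs hs1
  haveI : NeZero (4 * k) := ⟨by omega⟩
  classical
  obtain ⟨f, hf⟩ := hemb d (Finset.univ.image Φ)
  have hmem : ∀ x, Φ x ∈ Finset.univ.image Φ :=
    fun x => Finset.mem_image_of_mem _ (Finset.mem_univ x)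
  have hb := cotype_bound (fun i : Fin (4 * k ^ 2) => (Pi.single i 1 : Fin (4 * k ^ 2) → ZMod (4 * k)))
    (fun x => f (Φ x)) (ρp 1 : ℝ) (4 * ρp 1 + 1 : ℝ) (2 * k)
    (by have := (ρp 1).coe_nonneg; linarith)
    (by
      intro x t
      rw [← dist_eq_norm, ← coe_nndist]
      have h1 := (hf _ (hmem (x + ∑ i ∈ t, Pi.single i 1)) _ (hmem x)).2
      exact_mod_cast h1.trans (hmp (by exact_mod_cast hup x t)))
    (by
      intro x j
      rw [← dist_eq_norm, ← coe_nndist]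
      have h1 := (hf _ (hmem (x + (2 * k) • Pi.single j 1)) _ (hmem x)).1
      have h2 := hR (nndist (Φ (x + (2 * k) • Pi.single j 1)) (Φ x))
        (by exact_mod_cast hRs.trans (hlow x j))
      exact_mod_cast h2.trans h1)
    Finset.univ
  rw [Finset.card_univ, Fintype.card_fin] at hb
  push_cast at hb
  have hk0 : (0 : ℝ) < k := by exact_mod_cast hk
  have hK := (ρp 1).coe_nonneg
  have hk2 : (0 : ℝ) < 4 * (k : ℝ) ^ 2 := by positivity
  have h3 : (4 * (ρp 1 : ℝ) + 1 - 2 * ρp 1) ^ 2 ≤ 4 * (ρp 1 : ℝ) ^ 2 := by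
    refine le_of_mul_le_mul_left ?_ hk2
    linarith
  nlinarith
end
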